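/- Let X₁, …, Xₙ be real numbers that are not all equal, and let 𝔽ₙ be their empirical distribution function. Then there exists a maximizer (θ̂ₙ, ψ̂ₙ) ∈ ℝ × SC₀ of Ψₙ(θ, ψ) = Ψ(θ, ψ, 𝔽ₙ), and moreover every maximizing value θ̂ₙ lies in the interval [minᵢ Xᵢ, maxᵢ Xᵢ]. -/

import Mathlib

open MeasureTheory Filter Set
open scoped ENNReal NNReal

noncomputable section

/-- `exp` of an extended real number, valued in `ℝ≥0∞`. -/
def expE (y : EReal) : ℝ≥0∞ :=
  if y = ⊥ then 0 else if y = ⊤ then ⊤ else ENNReal.ofReal (Real.exp y.toReal)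

/-- Truncation of an extended real number to `ℝ≥0∞` (negative values go to `0`). -/
def toENN (y : EReal) : ℝ≥0∞ :=
  if y = ⊤ then ⊤ else ENNReal.ofReal y.toReal

/-- Signed (upper-minus-lower) integral of an `EReal`-valued function against a measure. -/
def eIntegral (μ : Measure ℝ) (ψ : ℝ → EReal) : EReal :=
  ((∫⁻ x, toENN (ψ x) ∂μ : ℝ≥0∞) : EReal) - ((∫⁻ x, toENN (-(ψ x)) ∂μ : ℝ≥0∞) : EReal)

/-- Concavity for `EReal`-valued functions on `ℝ`. -/
def EConcave (ψ : ℝ → EReal) : Prop :=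
  ∀ x y : ℝ, ∀ t : ℝ, 0 ≤ t → t ≤ 1 →
    ((t : EReal) * ψ x + (((1 - t) : ℝ) : EReal) * ψ y) ≤ ψ (t * x + (1 - t) * y)

/-- The class `SC₀` of proper, closed (upper semicontinuous), concave functions
`ℝ → [−∞, ∞)` that are symmetric about `0`. -/
def memSC0 (ψ : ℝ → EReal) : Prop :=
  (∀ x, ψ x < ⊤) ∧ (∃ x, ψ x ≠ ⊥) ∧ UpperSemicontinuous ψ ∧ EConcave ψ ∧ ∀ x, ψ (-x) = ψ x

/-- The criterion function `Ψ(θ, ψ, F) = ∫ ψ(x − θ) dμ(x) − ∫ e^{ψ(x)} dx`. -/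
def Psi (θ : ℝ) (ψ : ℝ → EReal) (μ : Measure ℝ) : EReal :=
  eIntegral μ (fun x => ψ (x - θ)) - ((∫⁻ x, expE (ψ x) : ℝ≥0∞) : EReal)

/-- `L(θ; F) = sup_{ψ ∈ SC₀} Ψ(θ, ψ, F)`. -/
def Ltheta (θ : ℝ) (μ : Measure ℝ) : EReal :=
  ⨆ ψ ∈ {ψ : ℝ → EReal | memSC0 ψ}, Psi θ ψ μ

/-- `L(F) = sup_{θ ∈ ℝ, ψ ∈ SC₀} Ψ(θ, ψ, F)`. -/
def Lsup (μ : Measure ℝ) : EReal := ⨆ θ : ℝ, Ltheta θ μ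

/-- Condition A: `μ` is a probability measure that is not a point mass,
with a finite first absolute moment. -/
def CondA (μ : Measure ℝ) : Prop :=
  IsProbabilityMeasure μ ∧ (∀ x : ℝ, μ ≠ Measure.dirac x) ∧
    (∫⁻ x, ENNReal.ofReal |x| ∂μ) < ⊤

/-- The empirical measure of the data `X₁, …, Xₙ`. -/
def empMeas {n : ℕ} (X : Fin n → ℝ) : Measure ℝ :=
  ((n : ℝ≥0∞))⁻¹ • ∑ i : Fin n, Measure.dirac (X i)

/-- The empirical measure of the first `n` entries of a sequence. -/
def empSeq (X : ℕ → ℝ) (n : ℕ) : Measure ℝ :=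
  ((n : ℝ≥0∞))⁻¹ • ∑ i ∈ Finset.range n, Measure.dirac (X i)

/-- The density `e^ψ` as a real-valued function. -/
def gReal (ψ : ℝ → EReal) (x : ℝ) : ℝ := (expE (ψ x)).toReal

/-- A knot of a concave function `ψ`: a point where the left and right derivatives
differ, or a boundary point of `dom ψ = {ψ > −∞}`. -/
def IsKnot (ψ : ℝ → EReal) (x : ℝ) : Prop :=
  x ∈ frontier {y : ℝ | ψ y ≠ ⊥} ∨
    derivWithin (fun y => (ψ y).toReal) (Set.Iio x) x ≠
      derivWithin (fun y => (ψ y).toReal) (Set.Ioi x) x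

/-- The class `𝒞` of proper closed concave functions `ℝ → [−∞, ∞)`. -/
def memC (φ : ℝ → EReal) : Prop :=
  (∀ x, φ x < ⊤) ∧ (∃ x, φ x ≠ ⊥) ∧ UpperSemicontinuous φ ∧ EConcave φ

/-- The criterion function `ω(φ, F) = ∫ φ dμ − ∫ e^{φ(x)} dx`. -/
def omegaF (φ : ℝ → EReal) (μ : Measure ℝ) : EReal :=
  eIntegral μ φ - ((∫⁻ x, expE (φ x) : ℝ≥0∞) : EReal)

/-- `(θ, ψ)` maximizes `Ψ(·, ·, μ)` over `ℝ × SC₀`. -/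
def IsMaximizer (θ : ℝ) (ψ : ℝ → EReal) (μ : Measure ℝ) : Prop :=
  memSC0 ψ ∧ ∀ (θ' : ℝ) (ψ' : ℝ → EReal), memSC0 ψ' → Psi θ' ψ' μ ≤ Psi θ ψ μ

/-- Condition B: the `θ`-component of a maximizer of `Ψ(·, ·, μ)` is unique. -/
def CondB (μ : Measure ℝ) : Prop :=
  ∀ (θ₁ θ₂ : ℝ) (ψ₁ ψ₂ : ℝ → EReal),
    IsMaximizer θ₁ ψ₁ μ → IsMaximizer θ₂ ψ₂ μ → θ₁ = θ₂

/-- `J(F) = {x : 0 < F(x) < 1}`. -/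
def Jset (μ : Measure ℝ) : Set ℝ := {x : ℝ | 0 < μ (Set.Iic x) ∧ μ (Set.Iic x) < 1}

/-- The Hellinger distance between two densities. -/
def Hdist (f g : ℝ → ℝ) : ℝ :=
  Real.sqrt ((1 / 2) * ∫ x, (Real.sqrt (f x) - Real.sqrt (g x)) ^ 2)

/-- Finite Fisher information for location: `g` is a.e. differentiable with
square-integrable score. -/
def FiniteFisher (g : ℝ → ℝ) : Prop :=
  ∃ D : ℝ → ℝ, (∀ᵐ x : ℝ, HasDerivAt g (D x) x) ∧
    (∫⁻ x, ENNReal.ofReal ((D x) ^ 2 / g x)) < ⊤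

/-- The symmetrization `μ^{sym}_θ = (μ + R_θ#μ)/2` of a measure about `θ`. -/
def symMeas (θ : ℝ) (μ : Measure ℝ) : Measure ℝ :=
  ((2 : ℝ≥0∞))⁻¹ • (μ + Measure.map (fun x => 2 * θ - x) μ)

end

open Topology

lemma expE_eq (y : EReal) : expE y = EReal.exp y := by
  induction y using EReal.rec <;> simp [expE]

lemma expE_mono {x y : EReal} (h : x ≤ y) : expE x ≤ expE y := by
  simp only [expE_eq]; exact EReal.exp_monotone h

lemma expE_coe (x : ℝ) : expE (x : EReal) = ENNReal.ofReal (Real.exp x) := by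
  simp [expE_eq]

lemma expE_measurable : Measurable expE := by
  have : expE = EReal.exp := funext expE_eq
  rw [this]
  exact EReal.exp_monotone.measurable

lemma sc0_meas {ψ : ℝ → EReal} (h : memSC0 ψ) : Measurable (fun x => expE (ψ x)) :=
  expE_measurable.comp h.2.2.1.measurable

/-- real representation -/
lemma sc0_real {ψ : ℝ → EReal} (h : memSC0 ψ) {x : ℝ} (hx : ψ x ≠ ⊥) :
    ((ψ x).toReal : EReal) = ψ x :=
  EReal.coe_toReal (h.1 x).ne hx

lemma hypo_convex {ψ : ℝ → EReal} (h : EConcave ψ) :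
    Convex ℝ {p : ℝ × ℝ | (p.2 : EReal) ≤ ψ p.1} := by
  rintro ⟨x, s⟩ hx ⟨y, r⟩ hy a b ha hb hab
  simp only [Set.mem_ofPred_eq] at hx hy ⊢
  have hb' : b = 1 - a := by linarith
  subst hb'
  refine le_trans ?_ (h x y a ha (by linarith))
  have : (((a • (x, s) + (1 - a) • (y, r)).2 : ℝ) : EReal)
      = (a : EReal) * (s : EReal) + ((1 - a : ℝ) : EReal) * (r : EReal) := by
    simp only [Prod.snd_add, Prod.smul_snd, smul_eq_mul]
    push_cast
    rfl
  rw [this]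
  exact add_le_add (mul_le_mul_of_nonneg_left hx (by exact_mod_cast ha))
    (mul_le_mul_of_nonneg_left hy (by exact_mod_cast hb))

lemma sc0_mono {ψ : ℝ → EReal} (h : memSC0 ψ) {x y : ℝ} (hxy : |x| ≤ |y|) : ψ y ≤ ψ x := by
  by_cases hb : ψ y = ⊥
  · rw [hb]; exact bot_le
  have hr := sc0_real h hb
  set s := (ψ y).toReal
  have hc := hypo_convex h.2.2.2.1
  have h1 : ((y, s) : ℝ × ℝ) ∈ {p : ℝ × ℝ | (p.2 : EReal) ≤ ψ p.1} := by
    simp [hr]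
  have h2 : ((-y, s) : ℝ × ℝ) ∈ {p : ℝ × ℝ | (p.2 : EReal) ≤ ψ p.1} := by
    simp [hr, h.2.2.2.2]
  by_cases hy : y = 0
  · subst hy
    have : x = 0 := by simpa using hxy
    rw [this]
  have hq : |x / y| ≤ 1 := by
    rw [abs_div]; exact div_le_one_of_le₀ hxy (abs_nonneg _)
  obtain ⟨hq1, hq2⟩ := abs_le.1 hq
  have h3 := hc h1 h2 (a := (1 + x / y) / 2) (b := (1 - x / y) / 2) (by linarith) (by linarith)
    (by ring)
  simp only [Set.mem_ofPred_eq, Prod.snd_add, Prod.smul_snd, smul_eq_mul, Prod.fst_add,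
    Prod.smul_fst] at h3
  have e1 : (1 + x / y) / 2 * y + (1 - x / y) / 2 * -y = x := by field_simp; ring
  have e2 : (1 + x / y) / 2 * s + (1 - x / y) / 2 * s = s := by ring
  rw [e1, e2, hr] at h3
  exact h3

lemma concave_of_hypo {ψ : ℝ → EReal} (ht : ∀ x, ψ x < ⊤)
    (h : Convex ℝ {p : ℝ × ℝ | (p.2 : EReal) ≤ ψ p.1}) : EConcave ψ := by
  intro x y t ht0 ht1
  rcases eq_or_lt_of_le ht0 with rfl | ht0'
  · simp
  rcases eq_or_lt_of_le ht1 with rfl | ht1'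
  · simp
  by_cases hx : ψ x = ⊥
  · rw [hx, EReal.coe_mul_bot_of_pos ht0', EReal.bot_add]; exact bot_le
  by_cases hy : ψ y = ⊥
  · rw [hy, EReal.coe_mul_bot_of_pos (by linarith : 0 < 1 - t), EReal.add_bot]; exact bot_le
  have hxr := EReal.coe_toReal (ht x).ne hx
  have hyr := EReal.coe_toReal (ht y).ne hy
  have h3 := @h (x, (ψ x).toReal) (by simp [hxr]) (y, (ψ y).toReal) (by simp [hyr]) t (1 - t) ht0
    (by linarith) (by ring)
  simp only [Set.mem_ofPred_eq, Prod.snd_add, Prod.smul_snd, smul_eq_mul, Prod.fst_add,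
    Prod.smul_fst] at h3
  rw [← hxr, ← hyr]
  exact_mod_cast h3

/-- restriction of ψ to [-a,a]. -/
noncomputable def restr (ψ : ℝ → EReal) (a : ℝ) : ℝ → EReal :=
  open Classical in fun x => if |x| ≤ a then ψ x else ⊥

lemma restr_mem {ψ : ℝ → EReal} (h : memSC0 ψ) {a : ℝ} (ha : 0 ≤ a) : memSC0 (restr ψ a) := by
  have htop : ∀ x, restr ψ a x < ⊤ := by
    intro x; unfold restr; split_ifs
    · exact h.1 x
    · exact bot_lt_top
  refine ⟨htop, ?_, ?_, ?_, ?_⟩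
  · obtain ⟨x, hx⟩ := h.2.1
    refine ⟨0, ?_⟩
    have : restr ψ a 0 = ψ 0 := by simp [restr, ha]
    rw [this]
    intro h0
    apply hx
    have := sc0_mono h (x := 0) (y := x) (by simp)
    rw [h0] at this
    exact le_bot_iff.1 this
  · rw [upperSemicontinuous_iff_isClosed_preimage]
    intro y
    by_cases hy : y = ⊥
    · subst hy; simp
    have : restr ψ a ⁻¹' Set.Ici y = (ψ ⁻¹' Set.Ici y) ∩ {x | |x| ≤ a} := by
      ext x
      by_cases hx : |x| ≤ a <;> simp [restr, hx, hy]
    rw [this]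
    exact ((upperSemicontinuous_iff_isClosed_preimage.1 h.2.2.1) y).inter
      (isClosed_le continuous_abs continuous_const)
  · apply concave_of_hypo htop
    have : {p : ℝ × ℝ | (p.2 : EReal) ≤ restr ψ a p.1} =
      {p : ℝ × ℝ | (p.2 : EReal) ≤ ψ p.1} ∩ (Set.Icc (-a) a ×ˢ Set.univ) := by
      ext ⟨x, s⟩
      by_cases hx : |x| ≤ a
      · simp [restr, hx, abs_le.1 hx]
      · simp [restr, hx]
        intro _ h1
        by_contra h2
        exact hx (abs_le.2 ⟨h1, not_lt.1 h2⟩)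
    rw [this]
    exact (hypo_convex h.2.2.2.1).inter ((convex_Icc _ _).prod convex_univ)
  · intro x; simp [restr, h.2.2.2.2 x]

lemma zero_mem : memSC0 (fun _ => (0 : EReal)) := by
  refine ⟨by simp, ⟨0, by simp⟩, upperSemicontinuous_const, ?_, by simp⟩
  apply concave_of_hypo (by simp)
  have : {p : ℝ × ℝ | (p.2 : EReal) ≤ 0} = Set.univ ×ˢ Set.Iic 0 := by
    ext ⟨x, s⟩; simp
  rw [this]
  exact convex_univ.prod (convex_Iic _)

/-- upper boundary of K. -/
noncomputable def ub (K : Set (ℝ × ℝ)) (x : ℝ) : EReal :=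
  sSup ((fun s : ℝ => (s : EReal)) '' {s | (x, s) ∈ K})

lemma ub_le_mem {K : Set (ℝ × ℝ)} {x s : ℝ} (h : (x, s) ∈ K) : (s : EReal) ≤ ub K x :=
  le_sSup ⟨s, h, rfl⟩

lemma ub_attained {K : Set (ℝ × ℝ)} (hK : IsCompact K) {x : ℝ} (h : ub K x ≠ ⊥) :
    ∃ s : ℝ, (x, s) ∈ K ∧ ub K x = s := by
  have hc : IsCompact {s : ℝ | (x, s) ∈ K} := by
    have : {s : ℝ | (x, s) ∈ K} = Prod.snd '' (K ∩ {p | p.1 = x}) := by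
      ext s; constructor
      · intro hs; exact ⟨(x, s), ⟨hs, rfl⟩, rfl⟩
      · rintro ⟨⟨a, b⟩, ⟨h1, h2⟩, h3⟩
        simp only [Set.mem_ofPred_eq] at *
        subst h2 h3; exact h1
    rw [this]
    exact (hK.inter_right (isClosed_eq continuous_fst continuous_const)).image continuous_snd
  have hne : {s : ℝ | (x, s) ∈ K}.Nonempty := by
    by_contra hne
    rw [Set.not_nonempty_iff_eq_empty] at hne
    exact h (by simp [ub, hne])
  obtain ⟨s, hs, hmax⟩ := hc.exists_isGreatest hne
  refine ⟨s, hs, le_antisymm (sSup_le ?_) (ub_le_mem hs)⟩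
  rintro _ ⟨r, hr, rfl⟩
  exact EReal.coe_le_coe_iff.2 (hmax hr)

lemma ub_mem {K : Set (ℝ × ℝ)} (hK : IsCompact K) (hc : Convex ℝ K) (hne : K.Nonempty)
    (hs : ∀ x s, (x, s) ∈ K → (-x, s) ∈ K) : memSC0 (ub K) := by
  have htop : ∀ x, ub K x < ⊤ := by
    intro x
    by_cases h : ub K x = ⊥
    · rw [h]; exact bot_lt_top
    · obtain ⟨s, -, h2⟩ := ub_attained hK h
      rw [h2]; exact EReal.coe_lt_top s
  refine ⟨htop, ?_, ?_, ?_, ?_⟩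
  · obtain ⟨⟨x, s⟩, h⟩ := hne
    refine ⟨x, fun h0 => ?_⟩
    have := ub_le_mem h
    rw [h0] at this
    exact absurd this (by simp)
  · rw [upperSemicontinuous_iff_isClosed_preimage]
    intro y
    by_cases hy : y = ⊥
    · subst hy; simp
    have : ub K ⁻¹' Set.Ici y = Prod.fst '' (K ∩ {p | y ≤ (p.2 : EReal)}) := by
      ext x; constructor
      · intro hx
        have hx' : y ≤ ub K x := hx
        obtain ⟨s, h1, h2⟩ := ub_attained hK (x := x) (fun h0 => hy (le_bot_iff.1 (h0 ▸ hx')))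
        exact ⟨(x, s), ⟨h1, by simpa [← h2] using hx'⟩, rfl⟩
      · rintro ⟨⟨a, b⟩, ⟨h1, h2⟩, h3⟩
        subst h3
        exact le_trans h2 (ub_le_mem h1)
    rw [this]
    exact ((hK.inter_right (isClosed_le continuous_const
      (continuous_coe_real_ereal.comp continuous_snd))).image continuous_fst).isClosed
  · apply concave_of_hypo htop
    rintro ⟨x, s⟩ hx ⟨y, r⟩ hy a b ha hb hab
    simp only [Set.mem_ofPred_eq] at hx hy ⊢
    obtain ⟨s', h1, h2⟩ := ub_attained hK (x := x) (fun h0 => by rw [h0] at hx; simp at hx)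
    obtain ⟨r', h3, h4⟩ := ub_attained hK (x := y) (fun h0 => by rw [h0] at hy; simp at hy)
    have := ub_le_mem (hc h1 h3 ha hb hab)
    rw [h2] at hx
    rw [h4] at hy
    refine le_trans ?_ this
    have hx' : s ≤ s' := by exact_mod_cast hx
    have hy' : r ≤ r' := by exact_mod_cast hy
    simp only [Prod.snd_add, Prod.smul_snd, smul_eq_mul]
    exact_mod_cast add_le_add (mul_le_mul_of_nonneg_left hx' ha) (mul_le_mul_of_nonneg_left hy' hb)
  · intro x
    have : {s | (-x, s) ∈ K} = {s | (x, s) ∈ K} := by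
      ext s; exact ⟨fun h => by simpa using hs _ _ h, fun h => hs _ _ h⟩
    simp [ub, this]

/-- change of variables -/
lemma lint_scale (f : ℝ → ℝ≥0∞) (hf : Measurable f) {t : ℝ} (ht : 0 < t) :
    ∫⁻ x, f (t * x) = ENNReal.ofReal t⁻¹ * ∫⁻ x, f x := by
  have h := Real.map_volume_mul_left ht.ne'
  rw [← lintegral_map hf (measurable_const_mul t), h, lintegral_smul_measure, smul_eq_mul,
    abs_of_pos (inv_pos.2 ht)]

lemma emp_lint {n : ℕ} (X : Fin n → ℝ) (f : ℝ → ℝ≥0∞) :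
    ∫⁻ x, f x ∂(empMeas X) = (n : ℝ≥0∞)⁻¹ * ∑ i, f (X i) := by
  simp [empMeas, lintegral_smul_measure, lintegral_finsetSum_measure, lintegral_dirac]

lemma toENN_coe (v : ℝ) : toENN (v : EReal) = ENNReal.ofReal v := by
  simp [toENN]

lemma emp_real {n : ℕ} (hn : n ≠ 0) (v : Fin n → ℝ) :
    (n : ℝ≥0∞)⁻¹ * ∑ i, ENNReal.ofReal (v i) = ENNReal.ofReal ((n : ℝ)⁻¹ * ∑ i, max (v i) 0) := by
  rw [ENNReal.ofReal_mul (by positivity), ENNReal.ofReal_inv_of_pos (by positivity),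
    ENNReal.ofReal_natCast, ENNReal.ofReal_sum_of_nonneg (by simp)]
  simp

lemma psi_eq {n : ℕ} (hn : n ≠ 0) (X : Fin n → ℝ) (θ : ℝ) (ψ : ℝ → EReal) (v : Fin n → ℝ)
    (hv : ∀ i, ψ (X i - θ) = v i) :
    Psi θ ψ (empMeas X) = (((n : ℝ)⁻¹ * ∑ i, v i : ℝ) : EReal)
      - ((∫⁻ x, expE (ψ x) : ℝ≥0∞) : EReal) := by
  unfold Psi eIntegral
  congr 1
  rw [emp_lint, emp_lint]
  simp only [hv, ← EReal.coe_neg, toENN_coe]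
  rw [emp_real hn v, emp_real hn (fun i => - v i), EReal.coe_ennreal_ofReal,
    EReal.coe_ennreal_ofReal, max_eq_left, max_eq_left, ← EReal.coe_sub, ← mul_sub,
    ← Finset.sum_sub_distrib]
  · congr 3
    ext i
    rcases le_total (v i) 0 with h | h
    · rw [max_eq_right h, max_eq_left (by linarith)]; ring
    · rw [max_eq_left h, max_eq_right (by linarith)]; ring
  · exact mul_nonneg (by positivity) (Finset.sum_nonneg fun i _ => le_max_right _ _)
  · exact mul_nonneg (by positivity) (Finset.sum_nonneg fun i _ => le_max_right _ _)

lemma psi_eq' {n : ℕ} (hn : n ≠ 0) (X : Fin n → ℝ) (θ : ℝ) (ψ : ℝ → EReal) (v : Fin n → ℝ)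
    (hv : ∀ i, ψ (X i - θ) = v i) (hI : ∫⁻ x, expE (ψ x) ≠ ⊤) :
    Psi θ ψ (empMeas X) =
      (((n : ℝ)⁻¹ * ∑ i, v i - (∫⁻ x, expE (ψ x)).toReal : ℝ) : EReal) := by
  rw [psi_eq hn X θ ψ v hv, EReal.coe_sub, EReal.coe_ennreal_toReal hI]

lemma psi_ne_bot {n : ℕ} (X : Fin n → ℝ) (θ : ℝ) (ψ : ℝ → EReal) (h : memSC0 ψ)
    (hb : Psi θ ψ (empMeas X) ≠ ⊥) :
    (∃ v : Fin n → ℝ, ∀ i, ψ (X i - θ) = v i) ∧ ∫⁻ x, expE (ψ x) ≠ ⊤ := by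
  refine ⟨⟨fun i => (ψ (X i - θ)).toReal, fun i => (sc0_real h ?_).symm⟩, ?_⟩
  · intro hi
    apply hb
    have : (∫⁻ x, toENN (-(ψ (x - θ))) ∂(empMeas X)) = ⊤ := by
      rw [emp_lint]
      have : ∑ i, toENN (-(ψ (X i - θ))) = ⊤ := by
        rw [ENNReal.sum_eq_top]
        exact ⟨i, Finset.mem_univ _, by simp [hi, toENN]⟩
      rw [this, ENNReal.mul_top]
      simp
    unfold Psi eIntegral
    rw [this, sub_eq_add_neg, sub_eq_add_neg]
    simp
  · intro hi
    apply hb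
    unfold Psi
    rw [hi, sub_eq_add_neg]
    simp

/-- lower bound for values gives a lower bound for Psi -/
lemma psi_ge {n : ℕ} (hn : n ≠ 0) (X : Fin n → ℝ) (θ : ℝ) (ψ : ℝ → EReal) (h : memSC0 ψ)
    (v : Fin n → ℝ) (hv : ∀ i, (v i : EReal) ≤ ψ (X i - θ)) (J : ℝ) (hJ : 0 ≤ J)
    (hI : ∫⁻ x, expE (ψ x) ≤ ENNReal.ofReal J) :
    (((n : ℝ)⁻¹ * ∑ i, v i - J : ℝ) : EReal) ≤ Psi θ ψ (empMeas X) := by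
  have hnb : ∀ i, ψ (X i - θ) ≠ ⊥ := fun i h0 => by
    have := hv i
    rw [h0] at this
    simp at this
  have hu : ∀ i, ψ (X i - θ) = (((ψ (X i - θ)).toReal : ℝ) : EReal) := fun i =>
    (sc0_real h (hnb i)).symm
  rw [psi_eq' hn X θ ψ _ hu (ne_top_of_le_ne_top ENNReal.ofReal_ne_top hI)]
  rw [EReal.coe_le_coe_iff]
  have h1 : (∫⁻ x, expE (ψ x)).toReal ≤ J := by
    have := ENNReal.toReal_mono ENNReal.ofReal_ne_top hI
    rwa [ENNReal.toReal_ofReal hJ] at this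
  have h2 : ∑ i, v i ≤ ∑ i, (ψ (X i - θ)).toReal := by
    apply Finset.sum_le_sum
    intro i _
    have := hv i
    rw [hu i] at this
    exact_mod_cast this
  have := mul_le_mul_of_nonneg_left h2 (by positivity : (0 : ℝ) ≤ (n : ℝ)⁻¹)
  linarith

/-- basic lower bound on the integral -/
lemma int_lower {ψ : ℝ → EReal} (h : memSC0 ψ) (hI : ∫⁻ x, expE (ψ x) ≠ ⊤) {D a b : ℝ} (hD : 0 < D)
    (hab : a ≤ b) (hb : (b : EReal) ≤ ψ 0) (ha : (a : EReal) ≤ ψ (D / 2)) :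
    D * Real.exp (b - 1) / (1 + b - a) ≤ (∫⁻ x, expE (ψ x)).toReal := by
  set u := 1 + b - a with hu
  have hu1 : 1 ≤ u := by linarith
  have hu0 : 0 < u := by linarith
  have key : ((b - 1 : ℝ) : EReal) ≤ ψ (D / (2 * u)) := by
    have h3 := @hypo_convex ψ h.2.2.2.1 (0, b) hb (D / 2, a) ha (1 - u⁻¹) u⁻¹
      (by have := inv_le_one_of_one_le₀ hu1; linarith) (by positivity) (by ring)
    simp only [Set.mem_ofPred_eq, Prod.snd_add, Prod.smul_snd, smul_eq_mul, Prod.fst_add,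
      Prod.smul_fst] at h3
    have e1 : (1 - u⁻¹) * 0 + u⁻¹ * (D / 2) = D / (2 * u) := by field_simp; ring
    rw [e1] at h3
    refine le_trans ?_ h3
    rw [EReal.coe_le_coe_iff]
    have : (1 - u⁻¹) * b + u⁻¹ * a = b - (u - 1) * u⁻¹ := by rw [hu]; ring
    rw [this]
    have : (u - 1) * u⁻¹ ≤ 1 := by
      rw [sub_mul, mul_inv_cancel₀ hu0.ne']
      have : 0 < u⁻¹ := by positivity
      linarith
    linarith
  set δ := D / (2 * u) with hδ
  have hδ0 : 0 < δ := by positivity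
  have h1 : ENNReal.ofReal (Real.exp (b - 1)) * volume (Set.Icc (-δ) δ) ≤ ∫⁻ x, expE (ψ x) := by
    rw [← setLIntegral_const]
    refine le_trans ?_ (setLIntegral_le_lintegral (Set.Icc (-δ) δ) _)
    refine setLIntegral_mono (sc0_meas h) ?_
    intro x hx
    rw [← expE_coe]
    apply expE_mono
    refine key.trans (sc0_mono h ?_)
    rw [abs_of_pos hδ0]
    exact abs_le.2 hx
  rw [Real.volume_Icc, ← ENNReal.ofReal_mul (Real.exp_pos _).le] at h1
  have h2 := ENNReal.toReal_mono hI h1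
  rw [ENNReal.toReal_ofReal (mul_nonneg (Real.exp_pos _).le (by linarith))] at h2
  refine le_trans (le_of_eq ?_) h2
  rw [hδ]
  field_simp
  ring

/-- pure real coercivity -/
lemma real_coercive (n D M0 : ℝ) (hn : 1 ≤ n) (hD : 0 < D) :
    ∃ C : ℝ, ∀ a b val : ℝ, a ≤ b → M0 ≤ val →
      val ≤ b - (b - a) / n - D * Real.exp (b - 1) / (1 + b - a) →
      -C ≤ a ∧ b ≤ C ∧ val ≤ C := by
  -- b upper bound: b + 1/n - 2 sqrt(D e^{b-1}/n) ≥ M0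
  obtain ⟨B, hB⟩ : ∃ B : ℝ, ∀ b ≥ B,
      b + 1 - 2 * Real.sqrt (D / n * Real.exp (b - 1)) < M0 := by
    set K := Real.sqrt (D / n * Real.exp (-1)) with hK
    have hK0 : 0 < K := by
      have : 0 < n := by linarith
      exact Real.sqrt_pos.2 (by positivity)
    refine ⟨max (max 0 (8 / K)) (2 - M0), fun b hb => ?_⟩
    have hb0 : 0 ≤ b := le_trans (le_trans (le_max_left _ _) (le_max_left _ _)) hb
    have hb1 : 8 / K ≤ b := le_trans (le_trans (le_max_right _ _) (le_max_left _ _)) hb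
    have hb2 : 2 - M0 ≤ b := le_trans (le_max_right _ _) hb
    have e : Real.sqrt (D / n * Real.exp (b - 1)) = K * Real.exp (b / 2) := by
      have : D / n * Real.exp (b - 1) = D / n * Real.exp (-1) * (Real.exp (b / 2)) ^ 2 := by
        rw [mul_assoc, ← Real.exp_nat_mul, ← Real.exp_add]
        congr 2
        push_cast
        ring
      rw [this, Real.sqrt_mul' _ (sq_nonneg _), Real.sqrt_sq (Real.exp_pos _).le]
    rw [e]
    have h1 := Real.quadratic_le_exp_of_nonneg (x := b / 2) (by linarith)
    rw [div_le_iff₀ hK0] at hb1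
    have h2 : K * (b ^ 2 / 8) ≤ K * Real.exp (b / 2) :=
      mul_le_mul_of_nonneg_left (by nlinarith) hK0.le
    nlinarith
  refine ⟨max |B| (n * (|B| - M0) + |M0|), ?_⟩
  intro a b val hab h0 h1
  set u := 1 + b - a with hu
  have hn0 : 0 < n := by linarith
  have hu1 : 1 ≤ u := by linarith
  have hu0 : 0 < u := by linarith
  set E := D * Real.exp (b - 1) with hE
  have hE0 : 0 < E := by positivity
  have hamgm : 2 * Real.sqrt (E / n) ≤ u / n + E / u := by
    have h2 : Real.sqrt (E / n) = Real.sqrt (u / n) * Real.sqrt (E / u) := by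
      rw [← Real.sqrt_mul (by positivity)]
      congr 1
      field_simp
    rw [h2]
    have := two_mul_le_add_sq (Real.sqrt (u / n)) (Real.sqrt (E / u))
    rw [Real.sq_sqrt (by positivity), Real.sq_sqrt (by positivity)] at this
    linarith
  have h1n : 1 / n ≤ 1 := by rw [div_le_one hn0]; exact hn
  have hba : (b - a) / n = u / n - 1 / n := by rw [hu]; ring
  have hbB : b ≤ B := by
    by_contra hc
    have := hB b (not_le.1 hc).le
    have e : D / n * Real.exp (b - 1) = E / n := by rw [hE]; ring
    rw [e] at this
    linarith
  have hEu : 0 < E / u := by positivity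
  have hban : 0 ≤ (b - a) / n := div_nonneg (by linarith) hn0.le
  have hBabs := le_abs_self B
  have hM := neg_abs_le M0
  have hq : (b - a) / n ≤ b - M0 := by linarith
  rw [div_le_iff₀ hn0] at hq
  have hC1 := le_max_left |B| (n * (|B| - M0) + |M0|)
  have hC2 := le_max_right |B| (n * (|B| - M0) + |M0|)
  refine ⟨?_, by linarith, by linarith⟩
  have : (b - M0) * n ≤ n * (|B| - M0) := by nlinarith
  linarith

lemma coercive {n : ℕ} (X : Fin n → ℝ) (i0 j0 : Fin n) (hX : X j0 < X i0) (M0 : ℝ) :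
    ∃ C : ℝ, ∀ (θ : ℝ) (ψ : ℝ → EReal) (v : Fin n → ℝ), memSC0 ψ →
      (∀ i, ψ (X i - θ) = v i) → ∫⁻ x, expE (ψ x) ≠ ⊤ →
      M0 ≤ (n : ℝ)⁻¹ * ∑ i, v i - (∫⁻ x, expE (ψ x)).toReal →
      (∀ i, v i ∈ Set.Icc (-C) C) ∧ (n : ℝ)⁻¹ * ∑ i, v i - (∫⁻ x, expE (ψ x)).toReal ≤ C := by
  have hn0 : n ≠ 0 := fun h => by subst h; exact i0.elim0
  have hn : (1 : ℝ) ≤ n := by exact_mod_cast Nat.one_le_iff_ne_zero.2 hn0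
  set D := X i0 - X j0 with hD
  have hD0 : 0 < D := by linarith
  obtain ⟨C, hC⟩ := real_coercive n D M0 hn hD0
  refine ⟨C, fun θ ψ v h hv hI hM => ?_⟩
  have : Nonempty (Fin n) := ⟨i0⟩
  obtain ⟨p, hp⟩ := Finite.exists_min v
  obtain ⟨q, hq⟩ := Finite.exists_max v
  have hb : ((v q : ℝ) : EReal) ≤ ψ 0 := by
    rw [← hv q]; exact sc0_mono h (by simp)
  have ha : ((v p : ℝ) : EReal) ≤ ψ (D / 2) := by
    have : ∃ i, D / 2 ≤ |X i - θ| := by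
      by_contra hc
      push Not at hc
      have h1 := hc i0
      have h2 := hc j0
      rw [abs_lt] at h1 h2
      linarith [h1.2, h2.1]
    obtain ⟨i, hi⟩ := this
    calc ((v p : ℝ) : EReal) ≤ v i := by exact_mod_cast hp i
      _ = ψ (X i - θ) := (hv i).symm
      _ ≤ ψ (D / 2) := sc0_mono h (by rwa [abs_of_pos (by positivity)])
  have hl := int_lower h hI hD0 (hp q) hb ha
  have hs : v q - v p ≤ ∑ i, (v q - v i) :=
    Finset.single_le_sum (f := fun i => v q - v i) (fun i _ => by linarith [hq i])
      (Finset.mem_univ p)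
  rw [Finset.sum_sub_distrib, Finset.sum_const, Finset.card_univ, Fintype.card_fin,
    nsmul_eq_mul] at hs
  have hmean : (n : ℝ)⁻¹ * ∑ i, v i ≤ v q - (v q - v p) / n := by
    have h1 : ∑ i, v i ≤ n * v q - (v q - v p) := by linarith
    have h2 := mul_le_mul_of_nonneg_left h1 (by positivity : (0 : ℝ) ≤ (n : ℝ)⁻¹)
    refine h2.trans (le_of_eq ?_)
    field_simp
  obtain ⟨h1, h2, h3⟩ := hC (v p) (v q) _ (hp q) hM (by linarith)
  exact ⟨fun i => ⟨h1.trans (hp i), (hq i).trans h2⟩, h3⟩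

lemma clamp_abs {m M x θ : ℝ} (h1 : m ≤ x) (h2 : x ≤ M) :
    |x - max m (min M θ)| ≤ |x - θ| := by
  rcases le_total θ m with h | h
  · rw [max_eq_left ((min_le_right _ _).trans h), abs_of_nonneg (by linarith),
      abs_of_nonneg (by linarith)]
    linarith
  · rcases le_total M θ with h' | h'
    · rw [min_eq_left h', max_eq_right (h1.trans h2), abs_of_nonpos (by linarith),
        abs_of_nonpos (by linarith)]
      linarith
    · rw [min_eq_right h', max_eq_right h]

/-- The finite point set. -/
def pts {n : ℕ} (X : Fin n → ℝ) (θ : ℝ) (v : Fin n → ℝ) (p : Fin n × Bool) : ℝ × ℝ :=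
  (if p.2 then X p.1 - θ else -(X p.1 - θ), v p.1)

lemma limit_lemma {n : ℕ} (i0 : Fin n) (X : Fin n → ℝ) (θs : ℕ → ℝ) (ψs : ℕ → ℝ → EReal)
    (vs : ℕ → Fin n → ℝ)
    (θ : ℝ) (v : Fin n → ℝ) (J : ℝ) (hψ : ∀ k, memSC0 (ψs k))
    (hv : ∀ k i, ψs k (X i - θs k) = vs k i) (hI : ∀ k, ∫⁻ x, expE (ψs k x) ≠ ⊤)
    (hθ : Tendsto θs atTop (𝓝 θ)) (hvl : Tendsto vs atTop (𝓝 v))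
    (hJ : Tendsto (fun k => (∫⁻ x, expE (ψs k x)).toReal) atTop (𝓝 J)) :
    ∃ ψ, memSC0 ψ ∧ (∀ i, (v i : EReal) ≤ ψ (X i - θ)) ∧
      ∫⁻ x, expE (ψ x) ≤ ENNReal.ofReal J := by
  set K := convexHull ℝ (Set.range (pts X θ v)) with hK
  have hKc : IsCompact K := (Set.finite_range _).isCompact_convexHull ℝ
  have hmem : ∀ p, pts X θ v p ∈ K := fun p => subset_convexHull _ _ ⟨p, rfl⟩
  have hrep : ∀ q ∈ K, ∃ (ι : Type) (_ : Fintype ι) (w : ι → ℝ) (z : ι → Fin n × Bool),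
      (∀ i, 0 ≤ w i) ∧ ∑ i, w i = 1 ∧ ∑ i, w i • pts X θ v (z i) = q := by
    intro q hq
    obtain ⟨ι, _, w, z, h1, h2, h3, h4⟩ := mem_convexHull_iff_exists_fintype.1 hq
    choose z' hz' using h3
    exact ⟨ι, inferInstance, w, z', h1, h2, by simpa [hz'] using h4⟩
  have hsym : ∀ x s, (x, s) ∈ K → (-x, s) ∈ K := by
    intro x s hx
    obtain ⟨ι, _, w, z, h1, h2, h3⟩ := hrep _ hx
    have : ((-x, s) : ℝ × ℝ) = ∑ i, w i • pts X θ v ((z i).1, !(z i).2) := by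
      have h4 := congrArg Prod.fst h3
      have h5 := congrArg Prod.snd h3
      simp only [Prod.fst_sum, Prod.snd_sum, Prod.smul_fst, Prod.smul_snd, smul_eq_mul] at h4 h5
      ext
      · simp only [Prod.fst_sum, Prod.smul_fst, smul_eq_mul]
        rw [← h4, ← Finset.sum_neg_distrib]
        refine Finset.sum_congr rfl fun i _ => ?_
        rcases hz : (z i).2 <;> simp [pts, hz] <;> ring
      · simp only [Prod.snd_sum, Prod.smul_snd, smul_eq_mul]
        rw [← h5]
        rfl
    rw [this]
    exact (convex_convexHull ℝ _).sum_mem (fun i _ => h1 i) h2 (fun i _ => hmem _)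
  have hsc : memSC0 (ub K) := ub_mem hKc (convex_convexHull ℝ _) ⟨_, hmem (i0, true)⟩ hsym
  refine ⟨ub K, hsc, fun i => ub_le_mem (by simpa [pts] using hmem (i, true)), ?_⟩
  have hpt : ∀ p, Tendsto (fun k => pts X (θs k) (vs k) p) atTop (𝓝 (pts X θ v p)) := by
    intro p
    refine Tendsto.prodMk_nhds ?_ ((tendsto_pi_nhds.1 hvl) p.1)
    rcases p with ⟨i, _ | _⟩
    · simpa using (tendsto_const_nhds.sub hθ).neg
    · simpa using (tendsto_const_nhds.sub hθ)
  have hhyp : ∀ k p, pts X (θs k) (vs k) p ∈ {p : ℝ × ℝ | (p.2 : EReal) ≤ ψs k p.1} := by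
    rintro k ⟨i, _ | _⟩
    · have := (hψ k).2.2.2.2 (X i - θs k)
      simp only [pts, Set.mem_ofPred_eq, Bool.false_eq_true, if_false]
      rw [this, hv]
    · simp [pts, hv]
  have hpoint : ∀ t : ℝ, 0 < t → t < 1 → ∀ x,
      expE (ub K x) ≤ liminf (fun k => expE (ψs k (t * x))) atTop := by
    intro t ht0 ht1 x
    by_cases hb : ub K x = ⊥
    · rw [hb]; simp [expE]
    obtain ⟨s, h1, h2⟩ := ub_attained hKc hb
    obtain ⟨ι, _, w, z, hw0, hw1, hw⟩ := hrep _ h1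
    have hlim : Tendsto (fun k => ∑ i, w i • pts X (θs k) (vs k) (z i)) atTop (𝓝 (x, s)) := by
      rw [← hw]
      exact tendsto_finsetSum _ fun i _ => (hpt (z i)).const_smul (w i)
    have hin : ∀ k, (∑ i, w i • pts X (θs k) (vs k) (z i)) ∈
        {p : ℝ × ℝ | (p.2 : EReal) ≤ ψs k p.1} := fun k =>
      (hypo_convex (hψ k).2.2.2.1).sum_mem (fun i _ => hw0 i) hw1 (fun i _ => hhyp k _)
    set Q := fun k => ∑ i, w i • pts X (θs k) (vs k) (z i)
    have hf : Tendsto (fun k => (Q k).1) atTop (𝓝 x) := (continuous_fst.tendsto _).comp hlim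
    have hs : Tendsto (fun k => (Q k).2) atTop (𝓝 s) := (continuous_snd.tendsto _).comp hlim
    have hev : ∀ᶠ k in atTop, |t * x| ≤ |(Q k).1| := by
      by_cases hx : x = 0
      · simp [hx]
      · have : |t * x| < |x| := by
          rw [abs_mul, abs_of_pos ht0]
          have := abs_pos.2 hx
          nlinarith
        filter_upwards [hf.abs.eventually (lt_mem_nhds this)] with k hk using hk.le
    have hE : Tendsto (fun k => expE (((Q k).2 : ℝ) : EReal)) atTop (𝓝 (expE (s : EReal))) := by
      simp only [expE_coe]
      exact ENNReal.tendsto_ofReal ((Real.continuous_exp.tendsto _).comp hs)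
    rw [h2, ← hE.liminf_eq]
    refine liminf_le_liminf ?_
    filter_upwards [hev] with k hk
    exact expE_mono ((hin k).trans (sc0_mono (hψ k) hk))
  have hIJ : Tendsto (fun k => ∫⁻ x, expE (ψs k x)) atTop (𝓝 (ENNReal.ofReal J)) := by
    have := ENNReal.tendsto_ofReal hJ
    simpa only [ENNReal.ofReal_toReal (hI _)] using this
  have hbound : ∀ t : ℝ, 0 < t → t < 1 →
      ∫⁻ x, expE (ub K x) ≤ ENNReal.ofReal t⁻¹ * ENNReal.ofReal J := by
    intro t ht0 ht1
    calc ∫⁻ x, expE (ub K x) ≤ ∫⁻ x, liminf (fun k => expE (ψs k (t * x))) atTop :=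
          lintegral_mono (hpoint t ht0 ht1)
      _ ≤ liminf (fun k => ∫⁻ x, expE (ψs k (t * x))) atTop :=
          lintegral_liminf_le fun k => (sc0_meas (hψ k)).comp (measurable_const_mul t)
      _ = liminf (fun k => ENNReal.ofReal t⁻¹ * ∫⁻ x, expE (ψs k x)) atTop := by
          congr 1; ext k
          exact lint_scale (fun x => expE (ψs k x)) (sc0_meas (hψ k)) ht0
      _ = ENNReal.ofReal t⁻¹ * ENNReal.ofReal J :=
          (ENNReal.Tendsto.const_mul hIJ (Or.inr ENNReal.ofReal_ne_top)).liminf_eq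
  have ht : Tendsto (fun t : ℝ => ENNReal.ofReal t⁻¹ * ENNReal.ofReal J) (𝓝[<] 1)
      (𝓝 (ENNReal.ofReal (1 : ℝ)⁻¹ * ENNReal.ofReal J)) := by
    refine ENNReal.Tendsto.mul_const ?_ (Or.inr ENNReal.ofReal_ne_top)
    refine ENNReal.tendsto_ofReal ?_
    exact (tendsto_inv₀ one_ne_zero).mono_left nhdsWithin_le_nhds
  have := ge_of_tendsto ht (b := ∫⁻ x, expE (ub K x)) (by
    have : Set.Ioo (0 : ℝ) 1 ∈ 𝓝[<] (1 : ℝ) := Ioo_mem_nhdsLT one_pos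
    filter_upwards [this] with t ht using hbound t ht.1 ht.2)
  simpa using this

lemma exists_max {n : ℕ} (X : Fin n → ℝ) (i0 j0 : Fin n) (hX : X j0 < X i0) :
    ∃ (θ : ℝ) (ψ : ℝ → EReal), memSC0 ψ ∧ Psi θ ψ (empMeas X) ≠ ⊥ ∧
        ∀ (θ' : ℝ) (ψ' : ℝ → EReal), memSC0 ψ' →
          Psi θ' ψ' (empMeas X) ≤ Psi θ ψ (empMeas X) := by
  have hn0 : n ≠ 0 := fun h => by subst h; exact i0.elim0
  have : Nonempty (Fin n) := ⟨i0⟩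
  obtain ⟨p, hp⟩ := Finite.exists_min X
  obtain ⟨q, hq⟩ := Finite.exists_max X
  -- the set of values
  set T : Set ℝ := {r | ∃ (θ : ℝ) (ψ : ℝ → EReal) (v : Fin n → ℝ), memSC0 ψ ∧
      (∀ i, ψ (X i - θ) = v i) ∧ ∫⁻ x, expE (ψ x) ≠ ⊤ ∧ θ ∈ Set.Icc (X p) (X q) ∧
      r = (n : ℝ)⁻¹ * ∑ i, v i - (∫⁻ x, expE (ψ x)).toReal} with hT
  have hTne : T.Nonempty := by
    set R := X q - X p
    have hR : 0 ≤ R := by have := hp q; simp only [R]; linarith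
    have hm := restr_mem zero_mem hR
    refine ⟨_, X p, restr (fun _ => 0) R, fun _ => 0, hm, ?_, ?_, ⟨le_rfl, hp q⟩, rfl⟩
    · intro i
      have : |X i - X p| ≤ R := by
        rw [abs_of_nonneg (by linarith [hp i])]
        linarith [hq i]
      simp [restr, this]
    · have : (fun x => expE (restr (fun _ => 0) R x)) = (Set.Icc (-R) R).indicator (fun _ => 1) := by
        ext x
        by_cases hx : |x| ≤ R
        · have h2 : x ∈ Set.Icc (-R) R := abs_le.1 hx
          simp [restr, hx, h2, expE]
        · have h2 : x ∉ Set.Icc (-R) R := fun h => hx (abs_le.2 h)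
          simp only [restr, hx, if_false, Set.indicator_of_notMem h2]
          simp [expE]
      rw [this, lintegral_indicator_const measurableSet_Icc]
      simp
  obtain ⟨r0, hr0⟩ := hTne
  obtain ⟨C, hC⟩ := coercive X i0 j0 hX (r0 - 1)
  have hTb : BddAbove T := by
    refine ⟨max C r0, ?_⟩
    rintro r ⟨θ, ψ, v, h1, h2, h3, -, rfl⟩
    by_cases hle : r0 - 1 ≤ (n : ℝ)⁻¹ * ∑ i, v i - (∫⁻ x, expE (ψ x)).toReal
    · exact le_trans (hC θ ψ v h1 h2 h3 hle).2 (le_max_left _ _)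
    · exact le_trans (by linarith) (le_max_right C r0)
  obtain ⟨r, -, hrl, hrT⟩ := exists_seq_tendsto_sSup ⟨r0, hr0⟩ hTb
  set S := sSup T with hS
  have hr0S : r0 ≤ S := le_csSup hTb hr0
  have hev : ∀ᶠ k in atTop, r0 - 1 ≤ r k :=
    (hrl.eventually (lt_mem_nhds (by linarith : r0 - 1 < S))).mono fun k hk => hk.le
  obtain ⟨N, hN⟩ := hev.exists_forall_of_atTop
  choose θs ψs vs h1 h2 h3 h4 h5 using fun k => hrT (k + N)
  have hrl' : Tendsto (fun k => r (k + N)) atTop (𝓝 S) := (tendsto_add_atTop_iff_nat N).2 hrl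
  have hvb : ∀ k i, vs k i ∈ Set.Icc (-C) C := fun k =>
    (hC (θs k) (ψs k) (vs k) (h1 k) (h2 k) (h3 k) (by rw [← h5]; exact hN _ (by omega))).1
  have hcpt : IsCompact (Set.Icc (X p) (X q) ×ˢ (Set.univ.pi fun _ : Fin n => Set.Icc (-C) C)) :=
    isCompact_Icc.prod (isCompact_univ_pi fun _ => isCompact_Icc)
  obtain ⟨⟨θ, v⟩, -, φ, hφ, hlim⟩ := hcpt.tendsto_subseq (x := fun k => (θs k, vs k))
    (fun k => ⟨h4 k, fun i _ => hvb k i⟩)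
  have hθ : Tendsto (fun k => θs (φ k)) atTop (𝓝 θ) := (continuous_fst.tendsto _).comp hlim
  have hv : Tendsto (fun k => vs (φ k)) atTop (𝓝 v) := (continuous_snd.tendsto _).comp hlim
  have hJ : Tendsto (fun k => (∫⁻ x, expE (ψs (φ k) x)).toReal) atTop
      (𝓝 ((n : ℝ)⁻¹ * ∑ i, v i - S)) := by
    have e : ∀ k, (∫⁻ x, expE (ψs k x)).toReal = (n : ℝ)⁻¹ * ∑ i, vs k i - r (k + N) := by
      intro k; rw [h5]; ring
    simp only [e]
    refine Tendsto.sub (Tendsto.const_mul _ (tendsto_finsetSum _ fun i _ =>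
      (tendsto_pi_nhds.1 hv) i)) ?_
    exact hrl'.comp hφ.tendsto_atTop
  have hJ0 : 0 ≤ (n : ℝ)⁻¹ * ∑ i, v i - S := ge_of_tendsto' hJ fun k => ENNReal.toReal_nonneg
  obtain ⟨ψ, hψ, hψv, hψI⟩ := limit_lemma i0 X (fun k => θs (φ k)) (fun k => ψs (φ k))
    (fun k => vs (φ k)) θ v _ (fun k => h1 _) (fun k => h2 _) (fun k => h3 _) hθ hv hJ
  have hge := psi_ge hn0 X θ ψ hψ v hψv _ hJ0 hψI
  rw [sub_sub_cancel] at hge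
  refine ⟨θ, ψ, hψ, fun h0 => ?_, ?_⟩
  · rw [h0] at hge; simp at hge
  intro θ' ψ' hψ'
  by_cases hb : Psi θ' ψ' (empMeas X) = ⊥
  · rw [hb]; exact bot_le
  obtain ⟨⟨v', hv'⟩, hI'⟩ := psi_ne_bot X θ' ψ' hψ' hb
  refine le_trans ?_ hge
  set θ'' := max (X p) (min (X q) θ') with hθ''
  have hle : ∀ i, ((v' i : ℝ) : EReal) ≤ ψ' (X i - θ'') := fun i => by
    rw [← hv' i]
    exact sc0_mono hψ' (clamp_abs (hp i) (hq i))
  have hge' := psi_ge hn0 X θ'' ψ' hψ' v' hle (∫⁻ x, expE (ψ' x)).toReal ENNReal.toReal_nonneg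
    (by rw [ENNReal.ofReal_toReal hI'])
  rw [← psi_eq' hn0 X θ' ψ' v' hv' hI'] at hge'
  refine hge'.trans ?_
  obtain ⟨⟨v2, hv2⟩, -⟩ := psi_ne_bot X θ'' ψ' hψ' (fun h0 => by
    rw [h0] at hge'; exact hb (le_bot_iff.1 hge'))
  rw [psi_eq' hn0 X θ'' ψ' v2 hv2 hI', EReal.coe_le_coe_iff]
  exact le_csSup hTb ⟨θ'', ψ', v2, hψ', hv2, hI', ⟨le_max_left _ _,
    max_le (hp q) (min_le_left _ _)⟩, rfl⟩

/-- strict improvement by truncation -/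
lemma strict_improve {n : ℕ} (hn0 : n ≠ 0) (X : Fin n → ℝ) (θ θ' a : ℝ) (ψ : ℝ → EReal)
    (h : memSC0 ψ)
    (hb : Psi θ ψ (empMeas X) ≠ ⊥) (ha : 0 ≤ a) (hle : ∀ i, |X i - θ'| ≤ a)
    (hle2 : ∀ i, |X i - θ'| ≤ |X i - θ|) (j : Fin n) (hj : a < |X j - θ|) :
    ∃ ψ', memSC0 ψ' ∧ Psi θ ψ (empMeas X) < Psi θ' ψ' (empMeas X) := by
  obtain ⟨⟨v, hv⟩, hI⟩ := psi_ne_bot X θ ψ h hb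
  have hm := restr_mem h ha
  refine ⟨restr ψ a, hm, ?_⟩
  have hval : ∀ i, ((v i : ℝ) : EReal) ≤ restr ψ a (X i - θ') := by
    intro i
    simp only [restr, hle i, if_true]
    rw [← hv i]
    exact sc0_mono h (hle2 i)
  set b := |X j - θ| with hbdef
  have hvb : ((v j : ℝ) : EReal) = ψ b := by
    rw [← hv j]
    exact le_antisymm (sc0_mono h (by simp [hbdef])) (sc0_mono h (by simp [hbdef]))
  -- integrals
  have hint : (∫⁻ x, expE (restr ψ a x)) + ENNReal.ofReal ((b - a) * Real.exp (v j))
      ≤ ∫⁻ x, expE (ψ x) := by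
    have e1 : ENNReal.ofReal ((b - a) * Real.exp (v j))
        = ∫⁻ x, (Set.Ioo a b).indicator (fun _ => ENNReal.ofReal (Real.exp (v j))) x := by
      rw [lintegral_indicator_const measurableSet_Ioo, Real.volume_Ioo, mul_comm,
        ENNReal.ofReal_mul (Real.exp_pos _).le]
    rw [e1, ← lintegral_add_left (sc0_meas hm)]
    refine lintegral_mono fun x => ?_
    by_cases hx : |x| ≤ a
    · have : x ∉ Set.Ioo a b := fun h2 => by
        have := (le_abs_self x).trans hx
        linarith [h2.1]
      simp [restr, hx, this]
    · have e2 : expE (restr ψ a x) = 0 := by simp [restr, hx, expE]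
      simp only [e2, zero_add]
      by_cases hx2 : x ∈ Set.Ioo a b
      · rw [Set.indicator_of_mem hx2, ← expE_coe, hvb]
        apply expE_mono
        apply sc0_mono h
        have : 0 < x := lt_of_le_of_lt ha hx2.1
        rw [abs_of_pos this, abs_of_pos (this.trans hx2.2)]
        exact hx2.2.le
      · rw [Set.indicator_of_notMem hx2]; exact zero_le
  have hI' : ∫⁻ x, expE (restr ψ a x) ≠ ⊤ :=
    ne_top_of_le_ne_top hI (le_trans (le_self_add) hint)
  have hpos : 0 < (b - a) * Real.exp (v j) := mul_pos (by linarith) (Real.exp_pos _)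
  have hreal := ENNReal.toReal_mono hI hint
  rw [ENNReal.toReal_add hI' ENNReal.ofReal_ne_top, ENNReal.toReal_ofReal hpos.le] at hreal
  have hge := psi_ge hn0 X θ' (restr ψ a) hm v hval (∫⁻ x, expE (restr ψ a x)).toReal
    ENNReal.toReal_nonneg (by rw [ENNReal.ofReal_toReal hI'])
  refine lt_of_lt_of_le ?_ hge
  rw [psi_eq' hn0 X θ ψ v hv hI, EReal.coe_lt_coe_iff]
  linarith


/-- For data `X₁, …, Xₙ` not all equal, a maximizer `(θ̂ₙ, ψ̂ₙ)` of
`Ψₙ` over `ℝ × SC₀` exists, and every maximizing `θ̂ₙ` lies in `[minᵢ Xᵢ, maxᵢ Xᵢ]`. -/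
theorem statement2 {n : ℕ} (X : Fin n → ℝ) (hne : ∃ i j, X i ≠ X j) :
    (∃ (θ : ℝ) (ψ : ℝ → EReal), memSC0 ψ ∧
        ∀ (θ' : ℝ) (ψ' : ℝ → EReal), memSC0 ψ' →
          Psi θ' ψ' (empMeas X) ≤ Psi θ ψ (empMeas X)) ∧
      ∀ (θ : ℝ) (ψ : ℝ → EReal), memSC0 ψ →
        (∀ (θ' : ℝ) (ψ' : ℝ → EReal), memSC0 ψ' →
          Psi θ' ψ' (empMeas X) ≤ Psi θ ψ (empMeas X)) →
        θ ∈ Set.Icc (sInf (Set.range X)) (sSup (Set.range X)) := by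
  obtain ⟨i0, j0, hX⟩ : ∃ i j, X j < X i := by
    obtain ⟨i, j, h⟩ := hne
    rcases lt_or_gt_of_ne h with h | h
    · exact ⟨j, i, h⟩
    · exact ⟨i, j, h⟩
  obtain ⟨θ₀, ψ₀, hψ₀, hb₀, hmax₀⟩ := exists_max X i0 j0 hX
  refine ⟨⟨θ₀, ψ₀, hψ₀, hmax₀⟩, ?_⟩
  intro θ ψ hψ hmax
  have hb : Psi θ ψ (empMeas X) ≠ ⊥ := fun h0 => by
    have := hmax θ₀ ψ₀ hψ₀
    rw [h0] at this
    exact hb₀ (le_bot_iff.1 this)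
  have hn0 : n ≠ 0 := fun h => by subst h; exact i0.elim0
  have : Nonempty (Fin n) := ⟨i0⟩
  obtain ⟨p, hp⟩ := Finite.exists_min X
  obtain ⟨q, hq⟩ := Finite.exists_max X
  constructor
  · refine (csInf_le (Set.finite_range X).bddBelow ⟨p, rfl⟩).trans ?_
    by_contra hc
    rw [not_le] at hc
    obtain ⟨ψ', h1, h2⟩ := strict_improve hn0 X θ (X p) (X q - X p) ψ hψ hb (by linarith [hp q])
      (fun i => by rw [abs_of_nonneg (by linarith [hp i])]; linarith [hq i])
      (fun i => by
        rw [abs_of_nonneg (by linarith [hp i]), abs_of_nonneg (by linarith [hp i])]; linarith)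
      q (by rw [abs_of_nonneg (by linarith [hp q])]; linarith)
    exact absurd (hmax _ _ h1) (not_le.2 h2)
  · refine le_trans ?_ (le_csSup (Set.finite_range X).bddAbove ⟨q, rfl⟩)
    by_contra hc
    rw [not_le] at hc
    obtain ⟨ψ', h1, h2⟩ := strict_improve hn0 X θ (X q) (X q - X p) ψ hψ hb (by linarith [hp q])
      (fun i => by rw [abs_of_nonpos (by linarith [hq i])]; linarith [hp i])
      (fun i => by
        rw [abs_of_nonpos (by linarith [hq i]), abs_of_nonpos (by linarith [hq i])]; linarith)
      p (by rw [abs_of_nonpos (by linarith [hq p])]; linarith)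
    exact absurd (hmax _ _ h1) (not_le.2 h2)
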